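/- arXiv:2001.02470 — 2 statements merged into one kernel-verified Lean document; each statement's English description precedes it below -/
import Mathlib

section
/- Suppose a is contained in the Jacobson radical of R and c := cd(a,M) = ara(a,M) > 0. If for every generating set {b_1,...,b_t} of a the canonical map λ^i_M : H^i(b_1,...,b_t; M) → H^i_a(M) from Koszul cohomology to local cohomology is surjective for all 0 ≤ i ≤ c-1, then M is a-relative Buchsbaum. -/
/-!
Formalization of a statement from "A theory of relative generalized Cohen-Macaulay modules"
by Divaani-Aazar, Ghanbari Doust, Tousi and Zakeri.

Throughout, `R` is a commutative Noetherian ring and `M` a finitely generated `R`-module.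
Conventions used below:
* `locH I i M` is the local cohomology module `H^i_I(M)` (Mathlib's `localCohomology`).
* Conditions `cd(I,M) = c`, `ara(I,M) = n`, `f_I(M) = f`, `grade(I,M) = r` are expressed by
  the predicates `IsCd`, `IsAra`, `IsFinDim`, `IsGrade`.
* Sequences are given as functions `Fin r → R`; `pSpan M x i = ⟨x_0,…,x_{i-1}⟩M`.
* Koszul (co)homology is defined via the explicit (co)chain complex on the `p`-element
  subsets of `{0,…,n-1}`, and the canonical map `λ^i` into local cohomology is the structure
  map (at exponent 1) into the direct limit of Koszul cohomologies of powers of the sequence,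
  which is the realization of `H^i_{⟨x⟩}(M)` used in the paper (2.1(iv)).
-/

open CategoryTheory

noncomputable section

variable {R : Type} [CommRing R]

/-! ### Sequences: prefix spans, weak sequences, filter regular sequences, d-sequences -/

/-- `pSpan M x i` is the submodule `⟨x_0, …, x_{i-1}⟩M` of `M`. -/
def pSpan (M : Type) [AddCommGroup M] [Module R M] {r : ℕ} (x : Fin r → R) (i : Fin r) :
    Submodule R M :=
  Ideal.span (x '' {j | j < i}) • (⊤ : Submodule R M)

/-- `x_1, …, x_r` is an `I`-weak sequence on `M`:
`(⟨x_1,…,x_{i-1}⟩M :_M x_i) ⊆ (⟨x_1,…,x_{i-1}⟩M :_M I)` for all `i`. -/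
def IsWeakSeq (I : Ideal R) (M : Type) [AddCommGroup M] [Module R M] {r : ℕ}
    (x : Fin r → R) : Prop :=
  ∀ i : Fin r, ∀ m : M, x i • m ∈ pSpan M x i → ∀ a ∈ I, a • m ∈ pSpan M x i

/-- `x_1, …, x_r` is an `I`-filter regular sequence on `M`:
`(⟨x_1,…,x_{i-1}⟩M :_M x_i) ⊆ ⋃ₜ (⟨x_1,…,x_{i-1}⟩M :_M I^t)` for all `i`. -/
def IsFilterRegSeq (I : Ideal R) (M : Type) [AddCommGroup M] [Module R M] {r : ℕ}
    (x : Fin r → R) : Prop :=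
  ∀ i : Fin r, ∀ m : M, x i • m ∈ pSpan M x i →
    ∃ t : ℕ, ∀ a ∈ I ^ t, a • m ∈ pSpan M x i

/-- An unconditioned `I`-filter regular sequence: filter regular in any order. -/
def IsUncondFilterRegSeq (I : Ideal R) (M : Type) [AddCommGroup M] [Module R M] {r : ℕ}
    (x : Fin r → R) : Prop :=
  ∀ σ : Equiv.Perm (Fin r), IsFilterRegSeq I M (x ∘ σ)

/-- An unconditioned `I`-weak sequence: all positive powers, in any order, form an
`I`-weak sequence. -/
def IsUncondWeakSeq (I : Ideal R) (M : Type) [AddCommGroup M] [Module R M] {r : ℕ}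
    (x : Fin r → R) : Prop :=
  ∀ σ : Equiv.Perm (Fin r), ∀ α : Fin r → ℕ, (∀ k, 0 < α k) →
    IsWeakSeq I M fun k => x (σ k) ^ α k

/-- `x_1, …, x_r` is a d-sequence on `M`:
`(⟨x_1,…,x_{i-1}⟩M :_M x_i x_j) = (⟨x_1,…,x_{i-1}⟩M :_M x_j)` for all `i ≤ j`. -/
def IsDSeq (M : Type) [AddCommGroup M] [Module R M] {r : ℕ} (x : Fin r → R) : Prop :=
  ∀ i j : Fin r, i ≤ j → ∀ m : M,
    ((x i * x j) • m ∈ pSpan M x i ↔ x j • m ∈ pSpan M x i)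

/-- An u.s.d-sequence on `M`: all positive powers, in any order, form a d-sequence. -/
def IsUSDSeq (M : Type) [AddCommGroup M] [Module R M] {r : ℕ} (x : Fin r → R) : Prop :=
  ∀ σ : Equiv.Perm (Fin r), ∀ α : Fin r → ℕ, (∀ k, 0 < α k) →
    IsDSeq M fun k => x (σ k) ^ α k

/-! ### Local cohomology, cohomological dimension, arithmetic rank -/

/-- The `i`-th local cohomology module `H^i_I(M)`. -/
abbrev locH (I : Ideal R) (i : ℕ) (M : Type) [AddCommGroup M] [Module R M] : ModuleCat R :=
  (localCohomology I i).obj (ModuleCat.of R M)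

/-- `cd(I, M) = c`: the cohomological dimension of `I` on `M` equals `c`, i.e.
`H^c_I(M) ≠ 0` and `H^i_I(M) = 0` for all `i > c`. -/
def IsCd (I : Ideal R) (M : Type) [AddCommGroup M] [Module R M] (c : ℕ) : Prop :=
  Nontrivial (locH I c M) ∧ ∀ i : ℕ, c < i → Subsingleton (locH I i M)

/-- `f_I(M) = f`: the `I`-finiteness dimension of `M` equals `f`, i.e. `f` is the least
integer such that `H^f_I(M)` is not finitely generated. -/
def IsFinDim (I : Ideal R) (M : Type) [AddCommGroup M] [Module R M] (f : ℕ) : Prop :=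
  (∀ i : ℕ, i < f → Module.Finite R (locH I i M)) ∧ ¬ Module.Finite R (locH I f M)

/-- `M` is `I`-relative generalized Cohen-Macaulay: `cd(I,M) ≤ 0` or `cd(I,M) = f_I(M)`. -/
def IsRelGCM (I : Ideal R) (M : Type) [AddCommGroup M] [Module R M] : Prop :=
  (∀ i : ℕ, 0 < i → Subsingleton (locH I i M)) ∨
    ∃ c : ℕ, IsCd I M c ∧ IsFinDim I M c

/-- `ara(I, M) = n`: the arithmetic rank of `I` with respect to `M` equals `n`, i.e. `n` is the
least integer such that there are `x_1, …, x_n ∈ R` with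
`Rad(⟨x_1,…,x_n⟩ + Ann M) = Rad(I + Ann M)`. -/
def IsAra (I : Ideal R) (M : Type) [AddCommGroup M] [Module R M] (n : ℕ) : Prop :=
  IsLeast {k : ℕ | ∃ x : Fin k → R,
    (Ideal.span (Set.range x) + Module.annihilator R M).radical
      = (I + Module.annihilator R M).radical} n

/-- `x_1, …, x_c` is an `I`-relative system of parameters of `M` (where `c = cd(I,M)`):
the `x_i` lie in `I` and `Rad(⟨x_1,…,x_c⟩ + Ann M) = Rad(I + Ann M)`. -/
def IsRsop (I : Ideal R) (M : Type) [AddCommGroup M] [Module R M] {c : ℕ}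
    (x : Fin c → R) : Prop :=
  (∀ j, x j ∈ I) ∧
    (Ideal.span (Set.range x) + Module.annihilator R M).radical
      = (I + Module.annihilator R M).radical

/-! ### Relative Buchsbaum and relative quasi Buchsbaum modules -/

/-- `M` is `I`-relative Buchsbaum: `cd(I,M) = ara(I,M)` and every `I`-relative system of
parameters of `M` is an `I`-weak sequence on `M`. -/
def IsRelBuchsbaum (I : Ideal R) (M : Type) [AddCommGroup M] [Module R M] : Prop :=
  ∃ c : ℕ, IsCd I M c ∧ IsAra I M c ∧
    ∀ x : Fin c → R, IsRsop I M x → IsWeakSeq I M x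

/-- `M` is `I`-relative quasi Buchsbaum: `cd(I,M) = ara(I,M)` and every `I`-relative system of
parameters of `M` contained in `I²` is an `I`-weak sequence on `M`. -/
def IsRelQuasiBuchsbaum (I : Ideal R) (M : Type) [AddCommGroup M] [Module R M] : Prop :=
  ∃ c : ℕ, IsCd I M c ∧ IsAra I M c ∧
    ∀ x : Fin c → R, IsRsop I M x → (∀ j, x j ∈ I ^ 2) → IsWeakSeq I M x

/-! ### Koszul cochain complexes, Koszul cohomology, and the canonical maps
`λ^i_M : H^i(x; M) → H^i_{⟨x⟩}(M)` -/

/-- The degree `p` term of the Koszul cochain complex of `M` on `n` elements: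
functions on the `p`-element subsets of `{1, …, n}` with values in `M`
(i.e. `Hom(Λ^p R^n, M)`). -/
abbrev KM (M : Type) (n p : ℕ) : Type := {s : Finset (Fin n) // s.card = p} → M

section Koszul

variable {M : Type} [AddCommGroup M] [Module R M]

/-- The Koszul cochain differential `K^p(x; M) → K^{p+1}(x; M)`. -/
def kd {n : ℕ} (x : Fin n → R) (p : ℕ) : KM M n p →ₗ[R] KM M n (p + 1) where
  toFun f t := ∑ j ∈ t.1.attach,
    ((-1 : R) ^ (t.1.filter (fun a => a < j.1)).card * x j.1) •
      f ⟨t.1.erase j.1, by rw [Finset.card_erase_of_mem j.2, t.2]; omega⟩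
  map_add' f g := by
    funext t
    simp [smul_add, Finset.sum_add_distrib]
  map_smul' r f := by
    funext t
    simp [Finset.smul_sum, smul_comm r]

/-- The transition map of Koszul cochain complexes raising the exponent of the defining
sequence by `e`: in degree `p` it multiplies the component at a subset `s`
by `(∏_{j ∈ s} x_j)^e`. -/
def kt {n : ℕ} (x : Fin n → R) (e p : ℕ) : KM M n p →ₗ[R] KM M n p where
  toFun f s := (∏ j ∈ s.1, x j) ^ e • f s
  map_add' f g := by funext s; simp [smul_add]
  map_smul' r f := by funext s; simp [smul_comm r]

/-- The transition maps are maps of cochain complexes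
`K^•(x^u; M) → K^•(x^{u+e}; M)`. -/
theorem kt_kd {n : ℕ} (x : Fin n → R) (u e p : ℕ) :
    (kt (M := M) x e (p + 1)).comp (kd (fun j => x j ^ u) p)
      = (kd (fun j => x j ^ (u + e)) p).comp (kt x e p) := by
  apply LinearMap.ext; intro f
  funext t
  simp only [LinearMap.comp_apply, kd, kt, LinearMap.coe_mk, AddHom.coe_mk]
  rw [Finset.smul_sum]
  refine Finset.sum_congr rfl fun j _ => ?_
  rw [smul_smul, smul_smul]
  congr 1
  rw [← Finset.mul_prod_erase t.1 x j.2]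
  ring

end Koszul

/-- The `R`-module of Koszul `p`-cocycles of `M` with respect to `y`. -/
def kZ {n : ℕ} (y : Fin n → R) (M : Type) [AddCommGroup M] [Module R M] (p : ℕ) :
    Submodule R (KM M n p) :=
  LinearMap.ker (kd y p)

/-- The `R`-module of Koszul `p`-coboundaries of `M` with respect to `y`. -/
def kB {n : ℕ} (y : Fin n → R) (M : Type) [AddCommGroup M] [Module R M] :
    (p : ℕ) → Submodule R (KM M n p)
  | 0 => ⊥
  | (q + 1) => LinearMap.range (kd y q)

/-- The `p`-th Koszul cohomology module `H^p(y; M)`: cocycles modulo coboundaries. -/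
abbrev Hk {n : ℕ} (y : Fin n → R) (M : Type) [AddCommGroup M] [Module R M] (p : ℕ) :=
  kZ y M p ⧸ ((kB y M p ⊓ kZ y M p).comap (kZ y M p).subtype)

section KoszulMaps

variable {M : Type} [AddCommGroup M] [Module R M]

theorem kt_mem_kZ {n : ℕ} (x : Fin n → R) {u v : ℕ} (h : u ≤ v) (p : ℕ) :
    ∀ f ∈ kZ (fun j => x j ^ (u + 1)) M p,
      kt x (v - u) p f ∈ kZ (fun j => x j ^ (v + 1)) M p := by
  intro f hf
  have he : u + 1 + (v - u) = v + 1 := by omega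
  have hc := congrArg (fun φ => φ f) (kt_kd (M := M) x (u + 1) (v - u) p)
  simp only [LinearMap.comp_apply] at hc
  rw [he] at hc
  simp only [kZ, LinearMap.mem_ker] at hf ⊢
  rw [← hc, hf, map_zero]

theorem kt_mem_kB {n : ℕ} (x : Fin n → R) {u v : ℕ} (h : u ≤ v) (p : ℕ) :
    ∀ f ∈ kB (fun j => x j ^ (u + 1)) M p,
      kt x (v - u) p f ∈ kB (fun j => x j ^ (v + 1)) M p := by
  intro f hf
  cases p with
  | zero =>
      simp only [kB, Submodule.mem_bot] at hf ⊢
      rw [hf, map_zero]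
  | succ q =>
      simp only [kB, LinearMap.mem_range] at hf ⊢
      obtain ⟨g, hg⟩ := hf
      refine ⟨kt x (v - u) q g, ?_⟩
      have he : u + 1 + (v - u) = v + 1 := by omega
      have hc := congrArg (fun φ => φ g) (kt_kd (M := M) x (u + 1) (v - u) q)
      simp only [LinearMap.comp_apply] at hc
      rw [he] at hc
      rw [← hc, hg]

end KoszulMaps

/-- The map `H^p(x^{u+1}; M) → H^p(x^{v+1}; M)`, `u ≤ v`, induced by the transition map of
Koszul cochain complexes. -/
def ktH {n : ℕ} (x : Fin n → R) (M : Type) [AddCommGroup M] [Module R M] (p : ℕ)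
    (u v : ℕ) (h : u ≤ v) :
    Hk (fun j => x j ^ (u + 1)) M p →ₗ[R] Hk (fun j => x j ^ (v + 1)) M p :=
  Submodule.mapQ _ _ ((kt x (v - u) p).restrict (kt_mem_kZ x h p)) (by
    rintro ⟨f, hfZ⟩ hfN
    simp only [Submodule.mem_comap, Submodule.mem_inf, Submodule.coe_subtype] at hfN ⊢
    exact ⟨kt_mem_kB x h p f hfN.1, kt_mem_kZ x h p f hfN.2⟩)

/-- `H^p_{⟨x⟩}(M)`, realized as the direct limit of the Koszul cohomology modules
`H^p(x^{u+1}; M)` along the transition maps (cf. 2.1(iv) in the paper). -/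
abbrev KLoc {n : ℕ} (x : Fin n → R) (M : Type) [AddCommGroup M] [Module R M] (p : ℕ) :=
  Module.DirectLimit (fun u : ℕ => Hk (fun j => x j ^ (u + 1)) M p)
    (fun u v h => ktH x M p u v h)

/-- Transport of Koszul cohomology along an equality of defining sequences. -/
def castHk {n : ℕ} (M : Type) [AddCommGroup M] [Module R M] (p : ℕ) {y z : Fin n → R}
    (h : y = z) : Hk y M p →ₗ[R] Hk z M p :=
  Eq.rec (motive := fun w _ => Hk y M p →ₗ[R] Hk w M p) LinearMap.id h

/-- The canonical map `λ^p_M : H^p(x; M) → H^p_{⟨x⟩}(M)`, i.e. the structure map of the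
direct limit at exponent `1`. -/
def klambda {n : ℕ} (x : Fin n → R) (M : Type) [AddCommGroup M] [Module R M] (p : ℕ) :
    Hk x M p →ₗ[R] KLoc x M p :=
  (Module.DirectLimit.of R ℕ (fun u : ℕ => Hk (fun j => x j ^ (u + 1)) M p)
      (fun u v h => ktH x M p u v h) 0).comp
    (castHk M p (funext fun j => by rw [zero_add, pow_one] :
      x = fun j => x j ^ (0 + 1)))

/-- Surjectivity of the canonical map `λ^p_M : H^p(x; M) → H^p_{⟨x⟩}(M)`. -/
def LambdaSurj {n : ℕ} (x : Fin n → R) (M : Type) [AddCommGroup M] [Module R M] (p : ℕ) :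
    Prop :=
  Function.Surjective (klambda x M p)

/-!
Fix one generating family `b` of `I`, and let `x` be a system of parameters. It suffices to show
`0 :_M x₁ ⊆ 0 :_M I`: under this inclusion the surjectivity of `λ^i` and `λ^{i+1}` on `M` gives that
of `λ^i` on `M / x₁M`, and one continues with `M / x₁M` and `x₂, …, x_c`.

The inclusion is proved by induction on `c`. Surjectivity of `λ^0` says that every element of `M`
killed by powers of the `b_k` lies in `T = 0 :_M I`. If `c = 1`, such powers kill `0 :_M x₁`. If
`c > 1`, no associated prime of `M / T` contains `I`, so prime avoidance for cosets gives
`z ∈ x₂ + ⟨x₁, x₃, …, x_c⟩` regular on `M / T`. The induction hypothesis applies to `M / z²M` with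
`x₁², x₃, …, x_c`, and Nakayama's lemma carries the inclusion from `M / z²M` back to `M`.
-/

section TotalKoszul

variable {A N ι : Type*} [CommRing A] [AddCommGroup N] [Module A N] [LinearOrder ι]

/-- The sign `(-1)^#{a ∈ s | a < j}` with which the `j`-th basis vector enters the Koszul
differential at the subset `s`. -/
def koszulSign (A : Type*) [CommRing A] (s : Finset ι) (j : ι) : A :=
  (-1) ^ (s.filter (· < j)).card

theorem koszulSign_mul_self (s : Finset ι) (j : ι) : koszulSign A s j * koszulSign A s j = 1 := by
  rw [koszulSign, ← mul_pow, neg_one_mul, neg_neg, one_pow]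

theorem koszulSign_insert {s : Finset ι} {k : ι} (hk : k ∉ s) (j : ι) :
    koszulSign A (insert k s) j = (if k < j then -1 else 1) * koszulSign A s j := by
  rw [koszulSign, koszulSign, Finset.filter_insert]
  split_ifs with hkj
  · rw [Finset.card_insert_of_notMem fun h => hk (Finset.mem_of_mem_filter k h), pow_succ']
  · rw [one_mul]

theorem koszulSign_insert_self {s : Finset ι} {k : ι} (hk : k ∉ s) :
    koszulSign A (insert k s) k = koszulSign A s k := by
  rw [koszulSign_insert hk, if_neg (lt_irrefl k), one_mul]

theorem koszulSign_mul_koszulSign_erase {s : Finset ι} {j k : ι} (hj : j ∈ s) (hk : k ∉ s) :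
    koszulSign A s j * koszulSign A (s.erase j) k
      = -(koszulSign A s k * koszulSign A (insert k s) j) := by
  have hs : koszulSign A s k = (if j < k then -1 else 1) * koszulSign A (s.erase j) k := by
    rw [← koszulSign_insert (Finset.notMem_erase j s), Finset.insert_erase hj]
  rw [hs, koszulSign_insert hk]
  rcases lt_or_gt_of_ne (ne_of_mem_of_not_mem hj hk) with hjk | hkj
  · rw [if_pos hjk, if_neg hjk.not_gt]
    ring
  · rw [if_neg hkj.not_gt, if_pos hkj]
    ring

/-- The Koszul differential of `x` in all degrees at once: cochains of all degrees together are the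
functions on all finite sets of indices, and `kd` is the restriction to the sets of one size. -/
def totalDifferential (x : ι → A) : (Finset ι → N) →ₗ[A] (Finset ι → N) where
  toFun F t := ∑ j ∈ t, (koszulSign A t j * x j) • F (t.erase j)
  map_add' F G := by
    funext t
    simp only [Pi.add_apply, smul_add, Finset.sum_add_distrib]
  map_smul' r F := by
    funext t
    simp only [Pi.smul_apply, smul_comm _ r, Finset.smul_sum, RingHom.id_apply]

theorem totalDifferential_apply (x : ι → A) (F : Finset ι → N) (t : Finset ι) :
    totalDifferential x F t = ∑ j ∈ t, (koszulSign A t j * x j) • F (t.erase j) :=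
  rfl

/-- Interior multiplication by the `k`-th basis vector, the contracting homotopy of the Koszul
complex in the direction `k`. -/
def contraction (A : Type*) [CommRing A] [Module A N] (k : ι) (F : Finset ι → N) : Finset ι → N :=
  fun s => if k ∈ s then 0 else koszulSign A s k • F (insert k s)

theorem contraction_of_mem {k : ι} {s : Finset ι} (hk : k ∈ s) (F : Finset ι → N) :
    contraction A k F s = 0 :=
  if_pos hk

theorem contraction_of_notMem {k : ι} {s : Finset ι} (hk : k ∉ s) (F : Finset ι → N) :
    contraction A k F s = koszulSign A s k • F (insert k s) :=
  if_neg hk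

theorem totalDifferential_contraction_of_mem (x : ι → A) (F : Finset ι → N) {k : ι}
    {t : Finset ι} (hk : k ∈ t) : totalDifferential x (contraction A k F) t = x k • F t := by
  rw [totalDifferential_apply, Finset.sum_eq_single_of_mem k hk]
  · rw [contraction_of_notMem (Finset.notMem_erase k t), Finset.insert_erase hk, smul_smul,
      ← koszulSign_insert_self (Finset.notMem_erase k t), Finset.insert_erase hk,
      mul_right_comm, koszulSign_mul_self, one_mul]
  · intro j _ hjk
    rw [contraction_of_mem (Finset.mem_erase_of_ne_of_mem hjk.symm hk), smul_zero]

theorem totalDifferential_contraction_of_notMem (x : ι → A) (F : Finset ι → N) {k : ι}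
    {t : Finset ι} (hk : k ∉ t) :
    totalDifferential x (contraction A k F) t
      = x k • F t - koszulSign A t k • totalDifferential x F (insert k t) := by
  have hk_term : koszulSign A t k • (koszulSign A (insert k t) k * x k) • F t = x k • F t := by
    rw [koszulSign_insert_self hk, smul_smul, ← mul_assoc, koszulSign_mul_self, one_mul]
  have hj_term : ∀ j ∈ t, (koszulSign A t j * x j) • contraction A k F (t.erase j)
      = -(koszulSign A t k • (koszulSign A (insert k t) j * x j) • F ((insert k t).erase j)) := by
    intro j hj
    rw [contraction_of_notMem fun h => hk (Finset.mem_of_mem_erase h),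
      Finset.erase_insert_of_ne (ne_of_mem_of_not_mem hj hk).symm, smul_smul, smul_smul,
      ← neg_smul, mul_right_comm, koszulSign_mul_koszulSign_erase hj hk]
    ring_nf
  rw [totalDifferential_apply, totalDifferential_apply, Finset.sum_insert hk,
    Finset.erase_insert hk, smul_add, hk_term, Finset.smul_sum, Finset.sum_congr rfl hj_term,
    Finset.sum_neg_distrib]
  abel

theorem totalDifferential_contraction (x : ι → A) (k : ι) (F : Finset ι → N) :
    totalDifferential x (contraction A k F)
      = x k • F - contraction A k (totalDifferential x F) := by
  funext t
  rw [Pi.sub_apply, Pi.smul_apply]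
  by_cases hk : k ∈ t
  · rw [totalDifferential_contraction_of_mem x F hk, contraction_of_mem hk, sub_zero]
  · rw [totalDifferential_contraction_of_notMem x F hk, contraction_of_notMem hk]

/- By the homotopy formula the square of the differential commutes with all contractions, and these
bring every component to the component at `∅`, which vanishes. -/
theorem totalDifferential_totalDifferential (x : ι → A) (F : Finset ι → N) :
    totalDifferential x (totalDifferential x F) = 0 := by
  have hcomm (k : ι) (G : Finset ι → N) :
      totalDifferential x (totalDifferential x (contraction A k G))
        = contraction A k (totalDifferential x (totalDifferential x G)) := by
    rw [totalDifferential_contraction, map_sub, map_smul, totalDifferential_contraction,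
      sub_sub_cancel]
  funext t
  induction t using Finset.induction_on generalizing F with
  | empty => rw [totalDifferential_apply, Finset.sum_empty, Pi.zero_apply]
  | insert k s hk ih =>
    have hs := ih (contraction A k F)
    rw [hcomm, contraction_of_notMem hk] at hs
    rw [← one_smul A (totalDifferential _ _ _), ← koszulSign_mul_self s k, mul_smul, hs,
      Pi.zero_apply, smul_zero, Pi.zero_apply]

end TotalKoszul

section KoszulDifferential

variable {M : Type} [AddCommGroup M] [Module R M] {n : ℕ}

theorem kd_comp_val (x : Fin n → R) (p : ℕ) (F : Finset (Fin n) → M) :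
    kd x p (F ∘ Subtype.val) = totalDifferential x F ∘ Subtype.val := by
  funext t
  exact Finset.sum_attach t.1 fun j => (koszulSign R t.1 j * x j) • F (t.1.erase j)

theorem kd_kd (x : Fin n → R) (p : ℕ) (f : KM M n p) : kd x (p + 1) (kd x p f) = 0 := by
  obtain ⟨F, rfl⟩ := Subtype.val_injective.surjective_comp_right f
  dsimp only
  rw [kd_comp_val, kd_comp_val, totalDifferential_totalDifferential]
  rfl

theorem kd_contraction_comp_val (x : Fin n → R) (p : ℕ) (k : Fin n) (F : Finset (Fin n) → M)
    (hF : F ∘ Subtype.val ∈ kZ x M (p + 1)) :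
    kd x p (contraction R k F ∘ Subtype.val) = x k • (F ∘ Subtype.val) := by
  rw [kZ, LinearMap.mem_ker, kd_comp_val] at hF
  rw [kd_comp_val, totalDifferential_contraction]
  funext t
  suffices contraction R k (totalDifferential x F) t.1 = 0 by
    simp only [Function.comp_apply, Pi.sub_apply, Pi.smul_apply, this, sub_zero]
  by_cases hk : k ∈ t.1
  · exact contraction_of_mem hk _
  · rw [contraction_of_notMem hk]
    have hcard : (insert k t.1).card = p + 1 + 1 := by rw [Finset.card_insert_of_notMem hk, t.2]
    exact smul_eq_zero_of_right _ (congrFun hF ⟨insert k t.1, hcard⟩)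

theorem smul_mem_range_kd (x : Fin n → R) (p : ℕ) {z : R} (hz : z ∈ Ideal.span (Set.range x))
    {g : KM M n (p + 1)} (hg : g ∈ kZ x M (p + 1)) :
    z • g ∈ LinearMap.range (kd (M := M) x p) := by
  obtain ⟨F, rfl⟩ := Subtype.val_injective.surjective_comp_right g
  have hspan : Ideal.span (Set.range x) ≤ (LinearMap.range (kd (M := M) x p)).comap
      (LinearMap.toSpanSingleton R _ (F ∘ Subtype.val)) := by
    rw [Ideal.span_le]
    rintro _ ⟨k, rfl⟩
    exact ⟨_, kd_contraction_comp_val x p k F hg⟩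
  exact hspan hz

theorem mem_kZ_zero_iff (x : Fin n → R) (f : KM M n 0) :
    f ∈ kZ x M 0 ↔ ∀ k, x k • f ⟨∅, rfl⟩ = 0 := by
  obtain ⟨F, rfl⟩ := Subtype.val_injective.surjective_comp_right f
  have happly (k : Fin n) : totalDifferential x F {k} = x k • F ∅ := by
    rw [totalDifferential_apply, Finset.sum_singleton, ← Finset.insert_empty,
      koszulSign_insert_self (Finset.notMem_empty k), Finset.erase_insert (Finset.notMem_empty k)]
    simp only [koszulSign, Finset.filter_empty, Finset.card_empty, pow_zero, one_mul]
  rw [kZ, LinearMap.mem_ker, kd_comp_val]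
  constructor
  · intro h k
    exact (happly k).symm.trans (congrFun h ⟨{k}, rfl⟩)
  · intro h
    funext t
    obtain ⟨k, hk⟩ := Finset.card_eq_one.mp t.2
    rw [Function.comp_apply, hk, happly]
    exact h k

end KoszulDifferential

section KoszulTransition

variable {M Q : Type} [AddCommGroup M] [Module R M] [AddCommGroup Q] [Module R Q] {n : ℕ}

theorem kt_kt (x : Fin n → R) (a b p : ℕ) (f : KM M n p) :
    kt x a p (kt x b p f) = kt x (b + a) p f := by
  funext s
  simp only [kt, LinearMap.coe_mk, AddHom.coe_mk, smul_smul]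
  rw [← pow_add, add_comm]

theorem kt_zero (x : Fin n → R) (p : ℕ) (f : KM M n p) : kt x 0 p f = f := by
  funext s
  simp only [kt, LinearMap.coe_mk, AddHom.coe_mk, pow_zero, one_smul]

theorem kt_apply_empty (x : Fin n → R) (e : ℕ) (f : KM M n 0) :
    kt x e 0 f ⟨∅, rfl⟩ = f ⟨∅, rfl⟩ := by
  simp only [kt, LinearMap.coe_mk, AddHom.coe_mk, Finset.prod_empty, one_pow, one_smul]

theorem kd_kt (x : Fin n → R) (u e p : ℕ) (f : KM M n p) :
    kd (fun j => x j ^ (u + e)) p (kt x e p f) = kt x e (p + 1) (kd (fun j => x j ^ u) p f) :=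
  (LinearMap.congr_fun (kt_kd x u e p) f).symm

theorem kd_kt_one (x : Fin n → R) (e p : ℕ) (f : KM M n p) :
    kd (fun j => x j ^ (e + 1)) p (kt x e p f) = kt x e (p + 1) (kd x p f) := by
  have h := kd_kt x 1 e p f
  simpa only [pow_one, add_comm 1 e] using h

theorem kd_compLeft (π : M →ₗ[R] Q) (x : Fin n → R) (p : ℕ) (f : KM M n p) :
    kd x p (π.compLeft _ f) = π.compLeft _ (kd x p f) := by
  funext t
  simp only [kd, LinearMap.coe_mk, AddHom.coe_mk, LinearMap.compLeft_apply, Function.comp_apply,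
    map_sum, map_smul]

theorem kt_compLeft (π : M →ₗ[R] Q) (x : Fin n → R) (e p : ℕ) (f : KM M n p) :
    kt x e p (π.compLeft _ f) = π.compLeft _ (kt x e p f) := by
  funext s
  exact (map_smul π _ _).symm

theorem compLeft_mem_kB (π : M →ₗ[R] Q) (x : Fin n → R) (p : ℕ) {f : KM M n p}
    (hf : f ∈ kB x M p) : π.compLeft _ f ∈ kB x Q p := by
  cases p with
  | zero => rw [(Submodule.mem_bot R).mp hf, map_zero]; exact zero_mem _
  | succ q =>
    obtain ⟨g, rfl⟩ := hf
    exact ⟨π.compLeft _ g, kd_compLeft π x q g⟩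

theorem Hk_mk_eq_mk_iff (y : Fin n → R) (p : ℕ) (f g : kZ y M p) :
    (Submodule.Quotient.mk f : Hk y M p) = Submodule.Quotient.mk g ↔
      (f - g : KM M n p) ∈ kB y M p := by
  rw [Submodule.Quotient.eq, Submodule.mem_comap, Submodule.mem_inf]
  exact and_iff_left (f - g).2

theorem castHk_mk {y z : Fin n → R} (h : y = z) (p : ℕ) (g : kZ y M p) :
    castHk M p h (Submodule.Quotient.mk g) = Submodule.Quotient.mk ⟨g, h ▸ g.2⟩ := by
  subst h
  rfl

theorem ktH_mk (x : Fin n → R) (p : ℕ) {u v : ℕ} (h : u ≤ v)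
    (f : kZ (fun j => x j ^ (u + 1)) M p) :
    ktH x M p u v h (Submodule.Quotient.mk f)
      = Submodule.Quotient.mk ⟨kt x (v - u) p f, kt_mem_kZ x h p f.1 f.2⟩ :=
  rfl

instance ktH_directedSystem (x : Fin n → R) (p : ℕ) :
    DirectedSystem (fun u : ℕ => Hk (fun j => x j ^ (u + 1)) M p)
      (fun u v h => ktH x M p u v h) where
  map_self u y := by
    obtain ⟨f, rfl⟩ := Submodule.Quotient.mk_surjective _ y
    simp only [ktH_mk, Nat.sub_self, kt_zero]
  map_map w v u huv hvw y := by
    obtain ⟨f, rfl⟩ := Submodule.Quotient.mk_surjective _ y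
    simp only [ktH_mk, kt_kt, add_comm (v - u), tsub_add_tsub_cancel hvw huv]

/-- The map `H^p(x^{u+1}; M) → H^p_{⟨x⟩}(M)` into the direct limit, applied to a cocycle. -/
def kclass (x : Fin n → R) (p u : ℕ) (f : kZ (fun j => x j ^ (u + 1)) M p) : KLoc x M p :=
  Module.DirectLimit.of R ℕ _ (fun u v h => ktH x M p u v h) u (Submodule.Quotient.mk f)

theorem kclass_kt (x : Fin n → R) (p : ℕ) {u v : ℕ} (h : u ≤ v)
    (f : kZ (fun j => x j ^ (u + 1)) M p) :
    kclass x p v ⟨kt x (v - u) p f, kt_mem_kZ x h p f.1 f.2⟩ = kclass x p u f := by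
  rw [kclass, ← ktH_mk x p h, Module.DirectLimit.of_f, kclass]


theorem klambda_mk (x : Fin n → R) (p : ℕ) (g : kZ x M p)
    (hg : (g : KM M n p) ∈ kZ (fun j => x j ^ (0 + 1)) M p) :
    klambda x M p (Submodule.Quotient.mk g) = kclass x p 0 ⟨g, hg⟩ := by
  rw [klambda, LinearMap.comp_apply, castHk_mk, kclass]

theorem klambda_mk_eq_iff (b : Fin n → R) (p u : ℕ) (g : kZ b M p)
    (f : kZ (fun j => b j ^ (u + 1)) M p) :
    klambda b M p (Submodule.Quotient.mk g) = kclass b p u f ↔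
      ∃ e, kt b (u + e) p g - kt b e p f ∈ kB (fun j => b j ^ (u + e + 1)) M p := by
  have hb : b = fun j => b j ^ (0 + 1) := funext fun j => by rw [zero_add, pow_one]
  have hg : (g : KM M n p) ∈ kZ (fun j => b j ^ (0 + 1)) M p := hb ▸ g.2
  rw [klambda_mk b p g hg, ← kclass_kt b p (Nat.zero_le u)]
  constructor
  · intro h
    obtain ⟨v, huv, hv⟩ := Module.DirectLimit.exists_eq_of_of_eq h
    obtain ⟨e, rfl⟩ := Nat.exists_eq_add_of_le huv
    rw [ktH_mk, ktH_mk, Hk_mk_eq_mk_iff] at hv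
    simp only [kt_kt, Nat.sub_zero, Nat.add_sub_cancel_left] at hv
    exact ⟨e, hv⟩
  · rintro ⟨e, he⟩
    rw [← kclass_kt b p (Nat.le_add_right u e), ← kclass_kt b p (Nat.le_add_right u e) f]
    refine congrArg (Module.DirectLimit.of R ℕ _ _ _) ((Hk_mk_eq_mk_iff _ _ _ _).mpr ?_)
    simpa only [kt_kt, Nat.sub_zero, Nat.add_sub_cancel_left] using he

theorem lambdaSurj_iff (b : Fin n → R) (p : ℕ) :
    LambdaSurj b M p ↔ ∀ u, ∀ f ∈ kZ (fun j => b j ^ (u + 1)) M p, ∃ g ∈ kZ b M p, ∃ e,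
      kt b (u + e) p g - kt b e p f ∈ kB (fun j => b j ^ (u + e + 1)) M p := by
  constructor
  · intro h u f hf
    obtain ⟨y, hy⟩ := h (kclass b p u ⟨f, hf⟩)
    obtain ⟨g, rfl⟩ := Submodule.Quotient.mk_surjective _ y
    exact ⟨g, g.2, (klambda_mk_eq_iff b p u g ⟨f, hf⟩).mp hy⟩
  · intro h y
    obtain ⟨u, y, rfl⟩ := Module.DirectLimit.exists_of y
    obtain ⟨f, rfl⟩ := Submodule.Quotient.mk_surjective _ y
    obtain ⟨g, hg, he⟩ := h u f f.2
    exact ⟨Submodule.Quotient.mk ⟨g, hg⟩, (klambda_mk_eq_iff b p u ⟨g, hg⟩ f).mpr he⟩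

end KoszulTransition

section QuotSMulTop

open scoped Pointwise

theorem compLeft_mkQ_eq_zero_iff {A N κ : Type*} [CommRing A] [AddCommGroup N] [Module A N] (z : A)
    (f : κ → N) : (z • (⊤ : Submodule A N)).mkQ.compLeft κ f = 0 ↔ ∃ h : κ → N, z • h = f := by
  simp only [funext_iff, LinearMap.compLeft_apply, Function.comp_apply, Submodule.mkQ_apply,
    Pi.zero_apply, Submodule.Quotient.mk_eq_zero, Submodule.mem_smul_pointwise_iff_exists,
    Submodule.mem_top, true_and, Pi.smul_apply, Classical.skolem]

variable {M : Type} [AddCommGroup M] [Module R M] {n : ℕ} {b : Fin n → R} {z : R}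

theorem kt_one_eq_zero_of_smul_eq_zero
    (hN : Submodule.torsionBy R M z ≤ Submodule.torsionBySet R M (Ideal.span (Set.range b)))
    {p : ℕ} {g : KM M n (p + 1)} (hg : z • g = 0) : kt b 1 (p + 1) g = 0 := by
  funext s
  obtain ⟨k, hk⟩ : s.1.Nonempty := Finset.card_pos.mp (s.2.symm ▸ p.succ_pos)
  have hgs : b k • g s = 0 := (Submodule.mem_torsionBySet_iff _ _).mp (hN (congrFun hg s))
    ⟨b k, Ideal.subset_span ⟨k, rfl⟩⟩
  change (∏ j ∈ s.1, b j) ^ 1 • g s = 0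
  rw [pow_one, ← Finset.prod_erase_mul _ _ hk, mul_smul, hgs, smul_zero]

theorem kt_one_mem_kZ_of_kd_eq_smul
    (hN : Submodule.torsionBy R M z ≤ Submodule.torsionBySet R M (Ideal.span (Set.range b)))
    {u p : ℕ} {f : KM M n p} {h : KM M n (p + 1)} (hf : kd (fun j => b j ^ u) p f = z • h) :
    kt b 1 (p + 1) h ∈ kZ (fun j => b j ^ (u + 1)) M (p + 1) := by
  rw [kZ, LinearMap.mem_ker, kd_kt]
  exact kt_one_eq_zero_of_smul_eq_zero hN (by rw [← map_smul, ← hf, kd_kd])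

/- The obstruction `h` to lifting a cocycle of `M / zM` to a cocycle of `M` comes from a cocycle `g`
of exponent `1`, and `z • g` is a coboundary since `z` annihilates Koszul cohomology. -/
theorem LambdaSurj.exists_lift_sub_mem_kZ {p : ℕ} (hsurj : LambdaSurj b M (p + 1))
    (hz : z ∈ Ideal.span (Set.range b))
    (hN : Submodule.torsionBy R M z ≤ Submodule.torsionBySet R M (Ideal.span (Set.range b)))
    {u : ℕ} {f : KM M n p} {h : KM M n (p + 1)} (hf : kd (fun j => b j ^ (u + 1)) p f = z • h) :
    ∃ g g' w e, kd b p g' = z • g ∧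
      kt b (u + e) p g' - kt b e p f - z • w ∈ kZ (fun j => b j ^ (u + e + 1)) M p := by
  obtain ⟨g, hg, e, w, hw⟩ :=
    (lambdaSurj_iff b (p + 1)).mp hsurj (u + 1) _ (kt_one_mem_kZ_of_kd_eq_smul hN hf)
  obtain ⟨g', hg'⟩ := smul_mem_range_kd b p hz hg
  refine ⟨g, g', w, 1 + e, hg', ?_⟩
  have hf' : kd (fun j => b j ^ (u + (1 + e) + 1)) p (kt b (1 + e) p f)
      = z • kt b (1 + e) (p + 1) h := by
    rw [add_right_comm u, kd_kt, hf, map_smul]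
  rw [kt_kt, add_assoc u 1 e] at hw
  rw [kZ, LinearMap.mem_ker, map_sub, map_sub, map_smul, hw, kd_kt_one, hg', hf', map_smul,
    smul_sub, sub_self]

theorem LambdaSurj.quotSMulTop {p : ℕ} (hsurj : LambdaSurj b M p)
    (hsurj' : LambdaSurj b M (p + 1)) (hz : z ∈ Ideal.span (Set.range b))
    (hN : Submodule.torsionBy R M z ≤ Submodule.torsionBySet R M (Ideal.span (Set.range b))) :
    LambdaSurj b (QuotSMulTop z M) p := by
  rw [lambdaSurj_iff] at hsurj ⊢
  intro u f' hf'
  set π := (z • (⊤ : Submodule R M)).mkQ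
  obtain ⟨f, rfl⟩ : ∃ f : KM M n p, π.compLeft _ f = f' :=
    (Submodule.mkQ_surjective _).comp_left f'
  have hπz {q : ℕ} (F : KM M n q) : π.compLeft _ (z • F) = 0 :=
    (compLeft_mkQ_eq_zero_iff z _).mpr ⟨F, rfl⟩
  rw [kZ, LinearMap.mem_ker, kd_compLeft] at hf'
  obtain ⟨h, hh⟩ := (compLeft_mkQ_eq_zero_iff z _).mp hf'
  obtain ⟨g, g', w, e, hg', hcocycle⟩ := hsurj'.exists_lift_sub_mem_kZ hz hN hh.symm
  obtain ⟨g₂, hg₂, d, hd⟩ := hsurj (u + e) _ hcocycle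
  refine ⟨π.compLeft _ (g' - g₂), ?_, e + d, ?_⟩
  · rw [kZ, LinearMap.mem_ker, kd_compLeft, map_sub, hg', LinearMap.mem_ker.mp hg₂, sub_zero, hπz]
  · rw [← add_assoc u e d, kt_compLeft, kt_compLeft]
    have hB := neg_mem (compLeft_mem_kB π _ p hd)
    simp only [map_sub, map_smul, kt_kt, hπz, sub_zero, neg_sub] at hB ⊢
    convert hB using 1
    abel

end QuotSMulTop

section DegreeZero

theorem mem_torsionBySet_span_range_iff {A N ι : Type*} [CommRing A] [AddCommGroup N] [Module A N]
    (b : ι → A) (m : N) :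
    m ∈ Submodule.torsionBySet A N (Ideal.span (Set.range b)) ↔ ∀ k, b k • m = 0 := by
  rw [← Submodule.torsionBySet_eq_torsionBySet_span, Submodule.mem_torsionBySet_iff]
  exact Set.forall_subtype_range_iff

variable {M : Type} [AddCommGroup M] [Module R M] {n : ℕ} {b : Fin n → R}

theorem LambdaSurj.mem_torsionBySet (hsurj : LambdaSurj b M 0) {m : M}
    (hm : ∀ k, ∃ e, b k ^ e • m = 0) :
    m ∈ Submodule.torsionBySet R M (Ideal.span (Set.range b)) := by
  choose e he using hm
  obtain ⟨u, hu⟩ := (Set.finite_range e).bddAbove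
  have hcocycle : (fun _ => m : KM M n 0) ∈ kZ (fun k => b k ^ (u + 1)) M 0 := by
    rw [mem_kZ_zero_iff]
    intro k
    have hle : e k ≤ u + 1 := (hu ⟨k, rfl⟩).trans u.le_succ
    rw [← Nat.sub_add_cancel hle, pow_add, mul_smul, he, smul_zero]
  obtain ⟨g, hg, d, hd⟩ := (lambdaSurj_iff b 0).mp hsurj u _ hcocycle
  have hgm : g ⟨∅, rfl⟩ = m := by
    have h := congrFun (sub_eq_zero.mp ((Submodule.mem_bot R).mp hd)) ⟨∅, rfl⟩
    rwa [kt_apply_empty, kt_apply_empty] at h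
  rw [mem_torsionBySet_span_range_iff, ← hgm]
  exact (mem_kZ_zero_iff b g).mp hg

theorem LambdaSurj.torsionBySet_quotient_eq_bot (hsurj : LambdaSurj b M 0) {I : Ideal R}
    (hb : Ideal.span (Set.range b) = I) :
    Submodule.torsionBySet R (M ⧸ Submodule.torsionBySet R M I) I = ⊥ := by
  subst hb
  rw [eq_bot_iff]
  intro q hq
  obtain ⟨m, rfl⟩ := Submodule.Quotient.mk_surjective _ q
  rw [mem_torsionBySet_span_range_iff] at hq
  refine (Submodule.Quotient.mk_eq_zero _).mpr (hsurj.mem_torsionBySet fun k => ⟨2, ?_⟩)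
  have hk := hq k
  rw [← Submodule.Quotient.mk_smul, Submodule.Quotient.mk_eq_zero,
    mem_torsionBySet_span_range_iff] at hk
  rw [pow_two, mul_smul, hk]

end DegreeZero

section PrimeAvoidance

variable {A : Type*} [CommRing A]

/- Ordinary avoidance, applied to the maximal members of `s` containing `a` and to the elements of
`J` lying in all maximal members that do not contain `a`. -/
theorem exists_add_notMem_of_finite {s : Set (Ideal A)} (hs : s.Finite)
    (hprime : ∀ p ∈ s, p.IsPrime) {a : A} {J : Ideal A} (h : ∀ p ∈ s, a ∈ p → ¬J ≤ p) :
    ∃ j ∈ J, ∀ p ∈ s, a + j ∉ p := by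
  set T : Set (Ideal A) := {p | Maximal (· ∈ s) p ∧ a ∈ p}
  set U : Set (Ideal A) := {p | Maximal (· ∈ s) p ∧ a ∉ p}
  have hTs : T ⊆ s := fun p hp => hp.1.prop
  have hU : U.Finite := hs.subset fun p hp => hp.1.prop
  have hnot_subset :
      ¬((J ⊓ hU.toFinset.inf id : Ideal A) : Set A) ⊆ ⋃ p ∈ T, (id p : Ideal A) := by
    rw [Ideal.subset_union_prime_finite (hs.subset hTs) (f := id) ⊥ ⊥
      fun p hp _ _ => hprime p (hTs hp)]
    rintro ⟨p, hpT, hle⟩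
    rcases (hprime p (hTs hpT)).inf_le.mp hle with hJp | hUp
    · exact h p (hTs hpT) hpT.2 hJp
    · obtain ⟨q, hq, hqp⟩ := (hprime p (hTs hpT)).inf_le'.mp hUp
      have hqU : q ∈ U := hU.mem_toFinset.mp hq
      exact hqU.2 (hqU.1.le_of_ge (hTs hpT) hqp hpT.2)
  obtain ⟨j, ⟨hjJ, hjU⟩, hjT⟩ := Set.not_subset.mp hnot_subset
  refine ⟨j, hjJ, fun p hp hmem => ?_⟩
  obtain ⟨q, hpq, hq⟩ := hs.exists_le_maximal hp
  by_cases haq : a ∈ q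
  · have hjq : j ∈ q := (add_mem_cancel_left haq).mp (hpq hmem)
    exact hjT (Set.mem_biUnion (show q ∈ T from ⟨hq, haq⟩) hjq)
  · have hjq : j ∈ q := Finset.inf_le (f := id) (hU.mem_toFinset.mpr ⟨hq, haq⟩) hjU
    exact haq ((add_mem_cancel_right hjq).mp (hpq hmem))

variable {N : Type*} [AddCommGroup N] [Module A N]

theorem not_le_of_mem_associatedPrimes [IsNoetherianRing A] {I : Ideal A}
    (hN : Submodule.torsionBySet A N I = ⊥) {p : Ideal A} (hp : p ∈ associatedPrimes A N) :
    ¬I ≤ p := by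
  intro hIp
  obtain ⟨hprime, m, rfl⟩ := isAssociatedPrime_iff.mp hp
  have hm : m ∈ Submodule.torsionBySet A N I :=
    (Submodule.mem_torsionBySet_iff _ _).mpr fun a => by
      simpa only [Submodule.mem_colon_singleton, Submodule.mem_bot] using hIp a.2
  rw [hN, Submodule.mem_bot] at hm
  refine hprime.one_notMem (Submodule.mem_colon_singleton.mpr ?_)
  rw [hm, smul_zero]
  exact zero_mem _

theorem exists_isSMulRegular_add [IsNoetherianRing A] [Module.Finite A N] {I : Ideal A} {w : A}
    {s : Set A} (hN : Submodule.torsionBySet A N I = ⊥)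
    (hsupp : Module.support A N ∩ PrimeSpectrum.zeroLocus (insert w s)
      ⊆ PrimeSpectrum.zeroLocus I) :
    ∃ j ∈ Ideal.span s, IsSMulRegular N (w + j) := by
  have havoid : ∀ p ∈ associatedPrimes A N, w ∈ p → ¬Ideal.span s ≤ p := by
    intro p hp hwp hsp
    let P : PrimeSpectrum A := ⟨p, hp.isPrime⟩
    have hP : P ∈ Module.support A N :=
      Module.mem_support_iff_of_finite.mpr (Submodule.annihilator_top.ge.trans hp.annihilator_le)
    exact not_le_of_mem_associatedPrimes hN hp
      (hsupp ⟨hP, Set.insert_subset hwp (Ideal.span_le.mp hsp)⟩)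
  obtain ⟨j, hj, hav⟩ := exists_add_notMem_of_finite (associatedPrimes.finite A N)
    (fun p hp => hp.isPrime) havoid
  refine ⟨j, hj, ?_⟩
  by_contra hreg
  have hmem : w + j ∈ {r : A | IsSMulRegular N r}ᶜ := hreg
  rw [← biUnion_associatedPrimes_eq_compl_regular] at hmem
  obtain ⟨p, hp, hpmem⟩ := Set.mem_iUnion₂.mp hmem
  exact hav p hp hpmem

end PrimeAvoidance

section Torsion

open scoped Pointwise

variable {A N : Type*} [CommRing A] [AddCommGroup N] [Module A N] {I : Ideal A}

theorem torsionBy_le_of_isSMulRegular_quotient {T : Submodule A N} {z : A}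
    (hz : IsSMulRegular (N ⧸ T) z) : Submodule.torsionBy A N z ≤ T := fun m hm =>
  (isSMulRegular_quotient_iff_mem_of_smul_mem T z).mp hz m
    ((Submodule.mem_torsionBy_iff z m).mp hm ▸ zero_mem T)

/- With `T = 0 :_N I`, Nakayama applies to `L = T :_N y` because `L ≤ T + I L`: an element `l` of
`L` is killed by `y ^ 2`, hence by `z` modulo `z ^ 2`, say `z l = z ^ 2 m`; then `l - z m ∈ T` and
`m ∈ L`. -/
theorem torsionBy_le_torsionBySet_of_quotSMulTop [IsNoetherian A N]
    (hI : I ≤ (⊥ : Ideal A).jacobson) {y z : A} (hy : y ∈ I) (hz : z ∈ I)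
    (hreg : IsSMulRegular (N ⧸ Submodule.torsionBySet A N I) z)
    (hquot : Submodule.torsionBy A (QuotSMulTop (z ^ 2) N) (y ^ 2)
      ≤ Submodule.torsionBySet A (QuotSMulTop (z ^ 2) N) I) :
    Submodule.torsionBy A N y ≤ Submodule.torsionBySet A N I := by
  set T := Submodule.torsionBySet A N I
  have hT {a : A} (ha : a ∈ I) {m : N} (hm : m ∈ T) : a • m = 0 :=
    (Submodule.mem_torsionBySet_iff _ _).mp hm ⟨a, ha⟩
  have hzT : ∀ m, z • m ∈ T → m ∈ T := (isSMulRegular_quotient_iff_mem_of_smul_mem T z).mp hreg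
  set L : Submodule A N := T.comap (LinearMap.lsmul A N y)
  have hL : L ≤ T ⊔ I • L := by
    intro l (hl : y • l ∈ T)
    have hmk : (Submodule.Quotient.mk l : QuotSMulTop (z ^ 2) N) ∈
        Submodule.torsionBy A _ (y ^ 2) := by
      rw [Submodule.mem_torsionBy_iff, ← Submodule.Quotient.mk_smul, pow_two y, mul_smul,
        hT hy hl, Submodule.Quotient.mk_zero]
    have hzmk := (Submodule.mem_torsionBySet_iff _ _).mp (hquot hmk) ⟨z, hz⟩
    obtain ⟨m, -, hm⟩ := (Submodule.mem_smul_pointwise_iff_exists _ _ _).mp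
      ((Submodule.Quotient.mk_eq_zero _).mp hzmk)
    replace hm : z • z • m = z • l := by rwa [smul_smul, ← pow_two]
    have hmL : y • m ∈ T := by
      refine hzT _ (hzT _ ?_)
      rw [smul_comm z y m, smul_comm z y, hm, smul_comm, hT hz hl]
      exact zero_mem T
    have hlm : l - z • m ∈ T := by
      refine hzT _ ?_
      rw [smul_sub, hm, sub_self]
      exact zero_mem T
    rw [← sub_add_cancel l (z • m)]
    exact Submodule.add_mem_sup hlm (Submodule.smul_mem_smul hz hmL)
  have hyL : Submodule.torsionBy A N y ≤ L := fun m hm =>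
    show y • m ∈ T from (Submodule.mem_torsionBy_iff y m).mp hm ▸ zero_mem T
  exact hyL.trans (Submodule.le_of_le_smul_of_le_jacobson_bot (IsNoetherian.noetherian L) hI hL)

theorem exists_pow_smul_eq_zero_of_support_inter_subset {y : A}
    (hsupp : Module.support A N ∩ PrimeSpectrum.zeroLocus {y} ⊆ PrimeSpectrum.zeroLocus I)
    {m : N} (hm : y • m = 0) {a : A} (ha : a ∈ I) : ∃ e, a ^ e • m = 0 := by
  have hann : y ∈ (A ∙ m).annihilator := by rwa [Submodule.mem_annihilator_span_singleton]
  have hle : I ≤ (A ∙ m).annihilator.radical := by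
    rw [← PrimeSpectrum.zeroLocus_subset_zeroLocus_iff]
    intro P hP
    refine hsupp ⟨?_, Set.singleton_subset_iff.mpr (hP hann)⟩
    refine Module.support_subset_of_injective (A ∙ m).subtype (A ∙ m).injective_subtype ?_
    rw [Module.support_eq_zeroLocus]
    exact hP
  obtain ⟨e, he⟩ := hle ha
  exact ⟨e, (Submodule.mem_annihilator_span_singleton m _).mp he⟩

end Torsion

section WeakSequence

open scoped Pointwise

theorem range_eq_insert_range_tail {α : Type*} {c : ℕ} (x : Fin (c + 1) → α) :
    Set.range x = insert (x 0) (Set.range (Fin.tail x)) := by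
  rw [← Fin.range_cons, Fin.cons_self_tail]

variable {M : Type} [AddCommGroup M] [Module R M]

theorem pSpan_zero {c : ℕ} (x : Fin (c + 1) → R) : pSpan M x 0 = ⊥ := by
  simp only [pSpan, Fin.not_lt_zero, Set.ofPred_false, Set.image_empty, Ideal.span_empty,
    Submodule.bot_smul]

theorem pSpan_succ {c : ℕ} (x : Fin (c + 1) → R) (i : Fin c) :
    pSpan M x i.succ
      = (pSpan (QuotSMulTop (x 0) M) (Fin.tail x) i).comap (x 0 • (⊤ : Submodule R M)).mkQ := by
  have himage : x '' {j | j < i.succ} = insert (x 0) (Fin.tail x '' {j | j < i}) := by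
    ext r
    simp only [Set.mem_image, Set.mem_ofPred_eq, Set.mem_insert_iff, Fin.exists_fin_succ,
      Fin.succ_pos, true_and, Fin.succ_lt_succ_iff, Fin.tail, eq_comm]
  rw [pSpan, pSpan, himage, Ideal.span_insert, Submodule.sup_smul,
    Submodule.ideal_span_singleton_smul, ← Submodule.range_mkQ (x 0 • (⊤ : Submodule R M)),
    ← Submodule.map_top, ← Submodule.map_smul'', Submodule.comap_map_mkQ]

theorem isWeakSeq_succ_iff {I : Ideal R} {c : ℕ} (x : Fin (c + 1) → R) :
    IsWeakSeq I M x ↔ Submodule.torsionBy R M (x 0) ≤ Submodule.torsionBySet R M I ∧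
      IsWeakSeq I (QuotSMulTop (x 0) M) (Fin.tail x) := by
  rw [IsWeakSeq, Fin.forall_fin_succ]
  refine and_congr ?_ (forall_congr' fun i => ?_)
  · simp only [pSpan_zero, Submodule.mem_bot, SetLike.le_def, Submodule.mem_torsionBy_iff,
      Submodule.mem_torsionBySet_iff, Subtype.forall, SetLike.mem_coe]
  · rw [(Submodule.mkQ_surjective (x 0 • (⊤ : Submodule R M))).forall, pSpan_succ]
    rfl

end WeakSequence

section ZeroLocus

variable {A : Type*} [CommRing A]

theorem zeroLocus_insert_add {s : Set A} {j : A} (hj : j ∈ Ideal.span s) (w : A) :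
    PrimeSpectrum.zeroLocus (insert (w + j) s) = PrimeSpectrum.zeroLocus (insert w s) := by
  ext P
  simp only [PrimeSpectrum.mem_zeroLocus, Set.insert_subset_iff]
  refine and_congr_left fun hs => ?_
  exact add_mem_cancel_right (Ideal.span_le.mpr hs hj)

theorem zeroLocus_insert_pow (y : A) (s : Set A) {e : ℕ} (he : 0 < e) :
    PrimeSpectrum.zeroLocus (insert (y ^ e) s) = PrimeSpectrum.zeroLocus (insert y s) := by
  rw [Set.insert_eq, Set.insert_eq, PrimeSpectrum.zeroLocus_union, PrimeSpectrum.zeroLocus_union,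
    PrimeSpectrum.zeroLocus_singleton_pow y e he]

end ZeroLocus

section SurjectiveCanonicalMaps

variable {I : Ideal R} {t : ℕ} {b : Fin t → R}

theorem torsionBy_le_torsionBySet_of_lambdaSurj [IsNoetherianRing R]
    (hI : I ≤ (⊥ : Ideal R).jacobson) (hb : Ideal.span (Set.range b) = I) {c : ℕ} {M : Type}
    [AddCommGroup M] [Module R M] [Module.Finite R M] (hsurj : ∀ i ≤ c, LambdaSurj b M i)
    {y : R} (hy : y ∈ I) {w : Fin c → R} (hw : ∀ k, w k ∈ I)
    (hsupp : Module.support R M ∩ PrimeSpectrum.zeroLocus (insert y (Set.range w))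
      ⊆ PrimeSpectrum.zeroLocus I) :
    Submodule.torsionBy R M y ≤ Submodule.torsionBySet R M I := by
  induction c generalizing M y with
  | zero =>
    intro m hm
    rw [Set.range_eq_empty, insert_empty_eq] at hsupp
    rw [← hb]
    exact (hsurj 0 le_rfl).mem_torsionBySet fun k =>
      exists_pow_smul_eq_zero_of_support_inter_subset hsupp
        ((Submodule.mem_torsionBy_iff y m).mp hm) (hb ▸ Ideal.subset_span ⟨k, rfl⟩)
  | succ c ih =>
    rw [range_eq_insert_range_tail w, Set.insert_comm] at hsupp
    set s := insert y (Set.range (Fin.tail w))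
    have hsuppT : Module.support R (M ⧸ Submodule.torsionBySet R M I) ⊆ Module.support R M :=
      Module.support_subset_of_surjective _ (Submodule.mkQ_surjective _)
    obtain ⟨j, hj, hreg⟩ := exists_isSMulRegular_add
      ((hsurj 0 (Nat.zero_le _)).torsionBySet_quotient_eq_bot hb)
      ((Set.inter_subset_inter_left _ hsuppT).trans hsupp)
    have hs : s ⊆ I := Set.insert_subset hy (Set.range_subset_iff.mpr fun k => hw k.succ)
    have hz : w 0 + j ∈ I := add_mem (hw 0) (Ideal.span_le.mpr hs hj)
    have htors := (torsionBy_le_of_isSMulRegular_quotient (hreg.pow 2)).trans_eq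
      (congrArg (fun J : Ideal R => Submodule.torsionBySet R M J) hb.symm)
    refine torsionBy_le_torsionBySet_of_quotSMulTop hI hy hz hreg (ih (w := Fin.tail w) ?_
      (Ideal.pow_mem_of_mem I hy 2 two_pos) (fun k => hw k.succ) ?_)
    · exact fun i hi => (hsurj i (Nat.le_succ_of_le hi)).quotSMulTop
        (hsurj (i + 1) (Nat.succ_le_succ hi)) (hb ▸ Ideal.pow_mem_of_mem I hz 2 two_pos) htors
    · rwa [Module.support_quotSMulTop, Set.inter_assoc,
        PrimeSpectrum.zeroLocus_singleton_pow _ _ two_pos, zeroLocus_insert_pow _ _ two_pos,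
        ← PrimeSpectrum.zeroLocus_union, Set.singleton_union, zeroLocus_insert_add hj]

theorem isWeakSeq_of_lambdaSurj [IsNoetherianRing R] (hI : I ≤ (⊥ : Ideal R).jacobson)
    (hb : Ideal.span (Set.range b) = I) {c : ℕ} {M : Type} [AddCommGroup M] [Module R M]
    [Module.Finite R M] (hsurj : ∀ i < c, LambdaSurj b M i) {x : Fin c → R}
    (hx : ∀ k, x k ∈ I)
    (hsupp : Module.support R M ∩ PrimeSpectrum.zeroLocus (Set.range x)
      ⊆ PrimeSpectrum.zeroLocus I) : IsWeakSeq I M x := by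
  induction c generalizing M with
  | zero => exact fun i => i.elim0
  | succ c ih =>
    rw [range_eq_insert_range_tail x] at hsupp
    have htors := torsionBy_le_torsionBySet_of_lambdaSurj hI hb
      (fun i hi => hsurj i (Nat.lt_succ_of_le hi)) (hx 0) (fun k => hx k.succ) hsupp
    refine (isWeakSeq_succ_iff x).mpr ⟨htors, ih (fun i hi => ?_) (fun k => hx k.succ) ?_⟩
    · subst hb
      exact (hsurj i (hi.trans c.lt_succ_self)).quotSMulTop (hsurj (i + 1) (Nat.succ_lt_succ hi))
        (hx 0) htors
    · rwa [Module.support_quotSMulTop, Set.inter_assoc, ← PrimeSpectrum.zeroLocus_union,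
        Set.singleton_union]

theorem IsRsop.support_inter_zeroLocus_subset {M : Type} [AddCommGroup M] [Module R M]
    [Module.Finite R M] {c : ℕ} {x : Fin c → R} (hx : IsRsop I M x) :
    Module.support R M ∩ PrimeSpectrum.zeroLocus (Set.range x) ⊆ PrimeSpectrum.zeroLocus I := by
  rw [Module.support_eq_zeroLocus, Set.inter_comm, ← PrimeSpectrum.zeroLocus_span (Set.range x),
    ← PrimeSpectrum.zeroLocus_sup, PrimeSpectrum.zeroLocus_subset_zeroLocus_iff,
    ← Submodule.add_eq_sup, hx.2]
  exact le_sup_left.trans Ideal.le_radical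

theorem theorem_4_2_i_iii_general [IsNoetherianRing R] (hI : I ≤ (⊥ : Ideal R).jacobson)
    (hb : Ideal.span (Set.range b) = I) {M : Type} [AddCommGroup M] [Module R M]
    [Module.Finite R M] {c : ℕ} (hsurj : ∀ i < c, LambdaSurj b M i) {x : Fin c → R}
    (hx : IsRsop I M x) : IsWeakSeq I M x :=
  isWeakSeq_of_lambdaSurj hI hb hsurj hx.1 hx.support_inter_zeroLocus_subset

end SurjectiveCanonicalMaps

/-- **Theorem 4.2, (i) ⟹ (iii).** Suppose `I` is contained in the Jacobson radical of `R`
and `c := cd(I,M) = ara(I,M) > 0`. If for every generating set `{b₁,…,b_t}` of `I` the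
canonical map `λ^i_M : H^i(b₁,…,b_t; M) → H^i_I(M)` is surjective for all `0 ≤ i ≤ c-1`,
then `M` is `I`-relative Buchsbaum. -/
theorem theorem_4_2_i_iii [IsNoetherianRing R] (I : Ideal R)
    (hjac : I ≤ (⊥ : Ideal R).jacobson)
    (M : Type) [AddCommGroup M] [Module R M] [Module.Finite R M]
    (c : ℕ) (hc : IsCd I M c) (ha : IsAra I M c) (hpos : 0 < c)
    (hsurj : ∀ (t : ℕ) (b : Fin t → R), Ideal.span (Set.range b) = I →
      ∀ i : ℕ, i < c → LambdaSurj b M i) :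
    IsRelBuchsbaum I M := by
  obtain ⟨t, b, hb⟩ :=
    Submodule.fg_iff_exists_fin_generating_family.mp (IsNoetherian.noetherian I)
  exact ⟨c, hc, ha, fun x hx => theorem_4_2_i_iii_general hjac hb (hsurj t b hb) hx⟩
end
end

section
/- Suppose c := cd(a,M) = ara(a,M) > 0. If M is a-relative Buchsbaum, then every a-relative system of parameters of M is an u.s.d-sequence on M. -/
/-!
Formalization of a statement from "A theory of relative generalized Cohen-Macaulay modules"
by Divaani-Aazar, Ghanbari Doust, Tousi and Zakeri.

Throughout, `R` is a commutative Noetherian ring and `M` a finitely generated `R`-module.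
Conventions used below:
* `locH I i M` is the local cohomology module `H^i_I(M)` (Mathlib's `localCohomology`).
* Conditions `cd(I,M) = c`, `ara(I,M) = n`, `f_I(M) = f`, `grade(I,M) = r` are expressed by
  the predicates `IsCd`, `IsAra`, `IsFinDim`, `IsGrade`.
* Sequences are given as functions `Fin r → R`; `pSpan M x i = ⟨x_0,…,x_{i-1}⟩M`.
* Koszul (co)homology is defined via the explicit (co)chain complex on the `p`-element
  subsets of `{0,…,n-1}`, and the canonical map `λ^i` into local cohomology is the structure
  map (at exponent 1) into the direct limit of Koszul cohomologies of powers of the sequence,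
  which is the realization of `H^i_{⟨x⟩}(M)` used in the paper (2.1(iv)).
-/

open CategoryTheory

noncomputable section

variable {R : Type} [CommRing R]

/-!
Permuted positive powers of an `I`-relative system of parameters again form one, so in a relative
Buchsbaum module they are all `I`-weak sequences. Put `N = ⟨x_1, …, x_{i-1}⟩M` and let `i ≤ j`. If
`x_i x_j m ∈ N`, then `x_j m` is killed by `x_i` modulo `N`, hence by `x_j ∈ I`, so `x_j ^ 2 m ∈ N`.
But `x_1, …, x_{i-1}, x_j ^ 2` also begins an `I`-weak sequence, whence `x_j m ∈ N`.
-/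

lemma radical_span_range_pow {A ι : Type*} [CommSemiring A] (x : ι → A) {α : ι → ℕ}
    (hα : ∀ k, 0 < α k) :
    (Ideal.span (Set.range fun k => x k ^ α k)).radical = (Ideal.span (Set.range x)).radical := by
  apply le_antisymm
  · refine Ideal.radical_mono (Ideal.span_le.mpr ?_)
    rintro _ ⟨k, rfl⟩
    exact Ideal.pow_mem_of_mem _ (Ideal.subset_span (Set.mem_range_self k)) _ (hα k)
  · refine Ideal.radical_le_radical_iff.mpr (Ideal.span_le.mpr ?_)
    rintro _ ⟨k, rfl⟩
    exact ⟨α k, Ideal.subset_span ⟨k, rfl⟩⟩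

section

variable {I : Ideal R} {M : Type} [AddCommGroup M] [Module R M] {r : ℕ} {x : Fin r → R}

lemma pSpan_congr {y : Fin r → R} {i : Fin r} (h : ∀ k < i, x k = y k) :
    pSpan M x i = pSpan M y i :=
  congrArg (fun s => Ideal.span s • (⊤ : Submodule R M)) (Set.image_congr h)

namespace IsRsop

lemma comp_surjective (hx : IsRsop I M x) {s : ℕ} {f : Fin s → Fin r}
    (hf : Function.Surjective f) : IsRsop I M (x ∘ f) :=
  ⟨fun k => hx.1 (f k), by rw [hf.range_comp, hx.2]⟩

lemma pow (hx : IsRsop I M x) {α : Fin r → ℕ} (hα : ∀ k, 0 < α k) :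
    IsRsop I M fun k => x k ^ α k := by
  refine ⟨fun k => Ideal.pow_mem_of_mem I (hx.1 k) _ (hα k), ?_⟩
  rw [← hx.2, Submodule.add_eq_sup, Submodule.add_eq_sup, Ideal.radical_sup,
    radical_span_range_pow x hα, ← Ideal.radical_sup]

end IsRsop

namespace IsUncondWeakSeq

lemma perm_pow (hx : IsUncondWeakSeq I M x) (σ : Equiv.Perm (Fin r)) {α : Fin r → ℕ}
    (hα : ∀ k, 0 < α k) : IsUncondWeakSeq I M fun k => x (σ k) ^ α k := by
  intro τ β hβ
  simpa only [Equiv.Perm.mul_apply, pow_mul] using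
    hx (σ * τ) (fun k => α (τ k) * β k) fun k => Nat.mul_pos (hα (τ k)) (hβ k)

lemma smul_mem_pSpan_of_pow_smul_mem (hx : IsUncondWeakSeq I M x) {i j : Fin r} (hij : i ≤ j)
    {n : ℕ} (hn : 0 < n) {m : M} (hm : x j ^ n • m ∈ pSpan M x i) {a : R} (ha : a ∈ I) :
    a • m ∈ pSpan M x i := by
  let y : Fin r → R := fun k => x (Equiv.swap i j k) ^ Function.update (fun _ => 1) i n k
  have hy : IsWeakSeq I M y :=
    hx (Equiv.swap i j) _ fun k => by by_cases hk : k = i <;> simp [hk, hn]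
  have hyx : pSpan M y i = pSpan M x i := pSpan_congr fun k hk => by
    simp [y, Equiv.swap_apply_of_ne_of_ne hk.ne (hk.trans_le hij).ne, hk.ne]
  have hyi : y i = x j ^ n := by simp [y]
  rw [← hyx] at hm ⊢
  exact hy i m (hyi ▸ hm) a ha

lemma isDSeq (hx : IsUncondWeakSeq I M x) (hxI : ∀ k, x k ∈ I) : IsDSeq M x := by
  intro i j hij m
  rw [mul_smul]
  refine ⟨fun h => ?_, Submodule.smul_mem _ _⟩
  have hsq : x j ^ 2 • m ∈ pSpan M x i := by
    rw [pow_two, mul_smul]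
    exact hx.smul_mem_pSpan_of_pow_smul_mem le_rfl one_pos (by rwa [pow_one]) (hxI j)
  exact hx.smul_mem_pSpan_of_pow_smul_mem hij two_pos hsq (hxI j)

lemma isUSDSeq (hx : IsUncondWeakSeq I M x) (hxI : ∀ k, x k ∈ I) : IsUSDSeq M x :=
  fun σ _ hα => (hx.perm_pow σ hα).isDSeq fun k => Ideal.pow_mem_of_mem I (hxI (σ k)) _ (hα k)

end IsUncondWeakSeq

end

theorem theorem_4_2_iii_iv_general (I : Ideal R) (M : Type) [AddCommGroup M] [Module R M] {r : ℕ}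
    (h : ∀ x : Fin r → R, IsRsop I M x → IsWeakSeq I M x) (x : Fin r → R) (hx : IsRsop I M x) :
    IsUSDSeq M x :=
  have hweak : IsUncondWeakSeq I M x := fun σ _ hα => h _ ((hx.comp_surjective σ.surjective).pow hα)
  hweak.isUSDSeq hx.1

/-- **Theorem 4.2, (iii) ⟹ (iv).** Suppose `c := cd(I,M) = ara(I,M) > 0`. If `M` is
`I`-relative Buchsbaum, then every `I`-relative system of parameters of `M` is an
u.s.d-sequence on `M`. -/
theorem theorem_4_2_iii_iv [IsNoetherianRing R] (I : Ideal R)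
    (M : Type) [AddCommGroup M] [Module R M] [Module.Finite R M]
    (c : ℕ) (hc : IsCd I M c) (ha : IsAra I M c) (hpos : 0 < c)
    (hb : IsRelBuchsbaum I M) :
    ∀ x : Fin c → R, IsRsop I M x → IsUSDSeq M x := by
  obtain ⟨c', _, ha', hweak⟩ := hb
  obtain rfl : c' = c := ha'.unique ha
  exact theorem_4_2_iii_iv_general I M hweak
end
end
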